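/- Srivastava's quadratic relation between F4 and F2: F4(a; b; c, a-b+1; x, y^2) = (1+y)^{-2a} F2(a; b, a-b+1/2; c, 2a-2b+1; x/(1+y)^2, 4y/(1+y)^2), as an identity of analytic functions near (x,y) = (0,0). -/

import Mathlib

/-!
For fixed `n`, the coefficient of `x ^ n` on both sides reduces the claim, with `A = a + n` and
`D = a - b`, to the quadratic transformation
`₂F₁(A, A - D; D + 1; y²) = (1 + y)^(-2A) ₂F₁(A, D + 1/2; 2D + 1; 4y / (1 + y)²)`.

Expanding the powers of `1 + y` on the right by the binomial series, the coefficient of `y ^ N` is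
the finite sum `quadS A D N` (a terminating `₃F₂(1)` of Watson type). Creative telescoping
(`quadS_partial`) gives the recurrence
`(N + 2)(2D + 2 + N) S(N + 2) = (2A + N)(2A - 2D + N) S(N)`, which with `S(0) = 1`, `S(1) = 0`
shows that the odd coefficients vanish (`quadS_odd`) and identifies the even ones with the
coefficients of the left-hand side (`quadS_even`).

Analytically, the expansion turns the right-hand side into a triple series (`tripleTerm`) that is
dominated by a product of three geometric series when `x` and `y` are small
(`exists_summable_tripleTerm`), so it may be regrouped by the exponents of `x` and `y`
(`tsum_regroup`). Summability of the `F4` series is not needed separately: its terms are those of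
the regrouped series with even exponent of `y`, indexed through `(n, m) ↦ (n, 2m)`, and all other
terms vanish.
-/

noncomputable def poch (a : ℂ) (n : ℕ) : ℂ := (ascPochhammer ℂ n).eval a

noncomputable def hpg21 (A B C z : ℂ) : ℂ :=
  ∑' n : ℕ, poch A n * poch B n / (poch C n * (n.factorial : ℂ)) * z ^ n

noncomputable def F2 (a b1 b2 c1 c2 x y : ℂ) : ℂ :=
  ∑' p : ℕ × ℕ, poch a (p.1 + p.2) * poch b1 p.1 * poch b2 p.2 /
    (poch c1 p.1 * poch c2 p.2 * (p.1.factorial : ℂ) * (p.2.factorial : ℂ)) * x ^ p.1 * y ^ p.2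

noncomputable def F4 (a b c1 c2 x y : ℂ) : ℂ :=
  ∑' p : ℕ × ℕ, poch a (p.1 + p.2) * poch b (p.1 + p.2) /
    (poch c1 p.1 * poch c2 p.2 * (p.1.factorial : ℂ) * (p.2.factorial : ℂ)) * x ^ p.1 * y ^ p.2

/-! ### The quadratic transformation on coefficients -/

theorem poch_zero (a : ℂ) : poch a 0 = 1 := by simp [poch]

theorem poch_succ (a : ℂ) (n : ℕ) : poch a (n + 1) = poch a n * (a + n) :=
  ascPochhammer_succ_eval n a

theorem poch_succ_left (a : ℂ) (n : ℕ) : poch a (n + 1) = a * poch (a + 1) n := by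
  simp [poch, ascPochhammer_succ_left]

theorem poch_add (a : ℂ) (n m : ℕ) : poch a (n + m) = poch a n * poch (a + n) m := by
  simp [poch, ← ascPochhammer_mul]

theorem poch_ne_zero {c : ℂ} (hc : ∀ n : ℕ, c ≠ -(n : ℂ)) (n : ℕ) : poch c n ≠ 0 := by
  induction n with
  | zero => simp [poch_zero]
  | succ n ih =>
    rw [poch_succ]
    exact mul_ne_zero ih fun h => hc n (eq_neg_of_add_eq_zero_left h)

/-- The coefficient of `z ^ k` in `₂F₁(A, D + 1/2; 2D + 1; 4z)`. -/
noncomputable def quadW (A D : ℂ) (k : ℕ) : ℂ :=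
  poch A k * poch (D + 1/2) k * 4 ^ k / (poch (2 * D + 1) k * (k.factorial : ℂ))

/-- The coefficient of `y ^ j` in the expansion of `(1 + y) ^ (-α)`. -/
noncomputable def binC (α : ℂ) (j : ℕ) : ℂ :=
  (-1) ^ j * poch α j / (j.factorial : ℂ)

/-- The coefficient of `y ^ N` in
`(1 + y) ^ (-2A) * ₂F₁(A, D + 1/2; 2D + 1; 4y / (1 + y) ^ 2)`. -/
noncomputable def quadS (A D : ℂ) (N : ℕ) : ℂ :=
  ∑ k ∈ Finset.range (N + 1), quadW A D k * binC (2 * A + 2 * k) (N - k)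

theorem quadW_succ (A D : ℂ) (h : ∀ n : ℕ, 2 * D + 1 ≠ -(n : ℂ)) (k : ℕ) :
    quadW A D (k + 1) * ((k + 1) * (2 * D + 1 + k)) =
      quadW A D k * (4 * (A + k) * (D + 1/2 + k)) := by
  have h1 := poch_ne_zero h k
  have h2 : 2 * D + 1 + k ≠ 0 := fun e => h k (eq_neg_of_add_eq_zero_left e)
  have h3 : (k : ℂ) + 1 ≠ 0 := by exact_mod_cast k.succ_ne_zero
  have h4 : (k.factorial : ℂ) ≠ 0 := by exact_mod_cast k.factorial_ne_zero
  unfold quadW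
  rw [poch_succ, poch_succ, poch_succ, Nat.factorial_succ, div_mul_eq_mul_div,
    div_mul_eq_mul_div, div_eq_div_iff (by push_cast; positivity) (by positivity)]
  push_cast
  ring

theorem binC_succ (α : ℂ) (j : ℕ) : binC α (j + 1) * (j + 1) = -(binC α j * (α + j)) := by
  have h3 : (j : ℂ) + 1 ≠ 0 := by exact_mod_cast j.succ_ne_zero
  have h4 : (j.factorial : ℂ) ≠ 0 := by exact_mod_cast j.factorial_ne_zero
  unfold binC
  rw [poch_succ, Nat.factorial_succ]
  push_cast
  field_simp
  ring

theorem binC_shift (α : ℂ) (j : ℕ) :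
    binC α (j + 2) * ((j + 1) * (j + 2)) = binC (α + 2) j * (α * (α + 1)) := by
  have h3 : (j : ℂ) + 1 ≠ 0 := by exact_mod_cast j.succ_ne_zero
  have h5 : (j : ℂ) + 2 ≠ 0 := by exact_mod_cast (j + 1).succ_ne_zero
  have h4 : (j.factorial : ℂ) ≠ 0 := by exact_mod_cast j.factorial_ne_zero
  unfold binC
  rw [poch_succ_left, poch_succ_left, Nat.factorial_succ, Nat.factorial_succ,
    show α + 1 + 1 = α + 2 by ring]
  push_cast
  rw [show (j : ℂ) + 1 + 1 = j + 2 by ring]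
  field_simp
  ring

/-- Partial sums of the creative-telescoping identity behind the recurrence `quadS_rec`; the
right-hand side is Zeilberger's certificate. -/
theorem quadS_partial (A D : ℂ) (h : ∀ n : ℕ, 2 * D + 1 ≠ -(n : ℂ)) (N K : ℕ) (hK : K ≤ N) :
    ∑ k ∈ Finset.range (K + 1), ((N + 2) * (2 * D + 2 + N) *
        (quadW A D k * binC (2 * A + 2 * k) (N + 2 - k)) -
      (2 * A + N) * (2 * A - 2 * D + N) * (quadW A D k * binC (2 * A + 2 * k) (N - k))) =
      -2 * (A + N + 1) * (2 * D + 1 + 2 * K) *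
        (quadW A D K * binC (2 * A + 2 * K) (N + 1 - K)) := by
  induction K with
  | zero =>
    have e1 := binC_succ (2 * A) N
    have e2 := binC_succ (2 * A) (N + 1)
    have h3 : (N : ℂ) + 1 ≠ 0 := by exact_mod_cast N.succ_ne_zero
    have h5 : (N : ℂ) + 2 ≠ 0 := by exact_mod_cast (N + 1).succ_ne_zero
    push_cast at e2
    rw [show (N : ℂ) + 1 + 1 = N + 2 by ring] at e2
    have e1' := eq_div_of_mul_eq h3 e1
    have e2' := eq_div_of_mul_eq h5 e2
    simp only [zero_add, Finset.sum_range_one, Nat.cast_zero, mul_zero, add_zero, Nat.sub_zero]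
    rw [e2', e1']
    field_simp
    ring
  | succ K ih =>
    obtain ⟨j, rfl⟩ := Nat.exists_eq_add_of_le hK
    rw [Finset.sum_range_succ, ih (by omega)]
    have e0 := quadW_succ A D h K
    have e1 := binC_succ (2 * A + 2 * (K + 1 : ℕ)) j
    have e2 := binC_succ (2 * A + 2 * (K + 1 : ℕ)) (j + 1)
    have e3 := binC_shift (2 * A + 2 * K) j
    rw [show K + 1 + j + 2 - (K + 1) = j + 1 + 1 by omega, show K + 1 + j - (K + 1) = j by omega,
      show K + 1 + j + 1 - (K + 1) = j + 1 by omega, show K + 1 + j + 1 - K = j + 2 by omega]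
    rw [show 2 * A + 2 * (K : ℂ) + 2 = 2 * A + 2 * (K + 1 : ℕ) by push_cast; ring] at e3
    have h3 : (j : ℂ) + 1 ≠ 0 := by exact_mod_cast j.succ_ne_zero
    have h5 : (j : ℂ) + 2 ≠ 0 := by exact_mod_cast (j + 1).succ_ne_zero
    push_cast at e1 e2 e3 ⊢
    rw [show (j : ℂ) + 1 + 1 = j + 2 by ring] at e2
    have e1' := eq_div_of_mul_eq h3 e1
    have e2' := eq_div_of_mul_eq h5 e2
    have e3' := eq_div_of_mul_eq (mul_ne_zero h3 h5) e3
    rw [e2', e1', e3']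
    generalize binC (2 * A + 2 * ((K : ℂ) + 1)) j = p
    generalize quadW A D (K + 1) = w1 at *
    generalize quadW A D K = w0 at *
    field_simp
    linear_combination (2 * (A + (K + 1 + j) + 1) * p * (2 * A + 2 * K + 1)) * e0

/-- The two-step recurrence for the coefficients `quadS`. -/
theorem quadS_rec (A D : ℂ) (h : ∀ n : ℕ, 2 * D + 1 ≠ -(n : ℂ)) (N : ℕ) :
    (N + 2) * (2 * D + 2 + N) * quadS A D (N + 2) =
      (2 * A + N) * (2 * A - 2 * D + N) * quadS A D N := by
  have hp := quadS_partial A D h N N le_rfl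
  rw [Finset.sum_sub_distrib, ← Finset.mul_sum, ← Finset.mul_sum] at hp
  have e0 := quadW_succ A D h N
  have e1 := quadW_succ A D h (N + 1)
  unfold quadS
  rw [Finset.sum_range_succ, Finset.sum_range_succ]
  rw [show N + 2 - (N + 1) = 1 by omega, show N + 2 - (N + 2) = 0 by omega]
  rw [show N + 1 - N = 1 by omega] at hp
  have b0 : ∀ α, binC α 0 = 1 := fun α => by simp [binC, poch_zero]
  have b1 : ∀ α, binC α 1 = -α := fun α => by simp [binC, poch]
  rw [b1] at hp
  rw [b0, b1]
  push_cast at hp e0 e1 ⊢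
  linear_combination hp + e1 - 2 * (A + N + 1) * e0

theorem quadS_odd (A D : ℂ) (h : ∀ n : ℕ, 2 * D + 1 ≠ -(n : ℂ)) (m : ℕ) :
    quadS A D (2 * m + 1) = 0 := by
  induction m with
  | zero =>
    have e0 := quadW_succ A D h 0
    have w0 : quadW A D 0 = 1 := by simp [quadW, poch_zero]
    have h0 : 2 * D + 1 ≠ 0 := by simpa using h 0
    rw [w0] at e0
    simp only [quadS, Finset.sum_range_succ, Finset.sum_range_zero, binC, poch]
    simp [w0]
    refine mul_right_cancel₀ h0 ?_
    simp at e0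
    linear_combination e0
  | succ m ih =>
    have e := quadS_rec A D h (2 * m + 1)
    rw [ih, mul_zero] at e
    have h1 : 2 * D + 2 + ((2 * m + 1 : ℕ) : ℂ) ≠ 0 := fun e => h (2 * m + 2) (by
      push_cast at e ⊢
      linear_combination e)
    have h2 : ((2 * m + 1 : ℕ) : ℂ) + 2 ≠ 0 := by exact_mod_cast (2 * m + 2).succ_ne_zero
    exact (mul_eq_zero.1 e).resolve_left (mul_ne_zero h2 h1)

theorem quadS_even (A D : ℂ) (h : ∀ n : ℕ, 2 * D + 1 ≠ -(n : ℂ))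
    (h' : ∀ n : ℕ, D + 1 ≠ -(n : ℂ)) (m : ℕ) :
    quadS A D (2 * m) = poch A m * poch (A - D) m / (poch (D + 1) m * (m.factorial : ℂ)) := by
  induction m with
  | zero => simp [quadS, quadW, binC, poch_zero]
  | succ m ih =>
    have e := quadS_rec A D h (2 * m)
    rw [ih] at e
    have h1 : D + 1 + (m : ℂ) ≠ 0 := fun e => h' m (eq_neg_of_add_eq_zero_left e)
    have h2 : (m : ℂ) + 1 ≠ 0 := by exact_mod_cast m.succ_ne_zero
    have h3 := poch_ne_zero h' m
    have h4 : (m.factorial : ℂ) ≠ 0 := by exact_mod_cast m.factorial_ne_zero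
    rw [show 2 * (m + 1) = 2 * m + 2 by ring, poch_succ, poch_succ, poch_succ, Nat.factorial_succ]
    rw [eq_div_iff (by push_cast; positivity)]
    push_cast at e ⊢
    field_simp at e
    linear_combination e

/-! ### Binomial series, bounds and regrouping -/

theorem hasSum_binC (α : ℂ) {y : ℂ} (hy : ‖y‖ < 1) :
    HasSum (fun j => binC α j * y ^ j) ((1 + y) ^ (-α)) := by
  have hy' : y ∈ Metric.eball (0 : ℂ) 1 := by
    simpa [Metric.mem_eball, edist_eq_enorm_sub, enorm_eq_nnnorm, ← NNReal.coe_lt_coe] using hy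
  have h := (Complex.one_add_cpow_hasFPowerSeriesOnBall_zero (a := -α)).hasSum hy'
  rw [zero_add] at h
  refine h.congr_fun ?_
  intro j
  have hm := Ring.factorial_nsmul_multichoose_eq_ascPochhammer α j
  have h4 : (j.factorial : ℂ) ≠ 0 := by exact_mod_cast j.factorial_ne_zero
  rw [Polynomial.ascPochhammer_smeval_eq_eval, nsmul_eq_mul] at hm
  have hm' := eq_div_of_mul_eq h4 ((mul_comm _ _).trans hm)
  rw [binomialSeries_apply, Ring.choose_neg, ← Ring.multichoose_eq, hm', binC, poch]
  simp only [Units.smul_def, Int.coe_negOnePow_natCast, zsmul_eq_mul, smul_eq_mul,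
    List.ofFn_const, List.prod_replicate]
  push_cast
  ring

theorem norm_poch_le (a : ℂ) (n : ℕ) : ‖poch a n‖ ≤ (‖a‖ + 1) ^ n * n.factorial := by
  induction n with
  | zero => simp [poch_zero]
  | succ n ih =>
    rw [poch_succ, norm_mul, Nat.factorial_succ, pow_succ]
    have h1 : ‖a + n‖ ≤ (‖a‖ + 1) * (n + 1) := by
      refine (norm_add_le _ _).trans ?_
      rw [Complex.norm_natCast]
      nlinarith [norm_nonneg a, (Nat.cast_nonneg n : (0 : ℝ) ≤ n)]
    calc _ ≤ ((‖a‖ + 1) ^ n * n.factorial) * ((‖a‖ + 1) * (n + 1)) := by gcongr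
      _ = _ := by push_cast; ring

/-- `1 / (c)_n` is at most geometrically larger than `1 / n!`, since the ratios
`(n + 1) / ‖c + n‖` are eventually at most `2`. -/
theorem exists_poch_inv_le {c : ℂ} (hc : ∀ n : ℕ, c ≠ -(n : ℂ)) :
    ∃ R : ℝ, 0 < R ∧ ∀ n : ℕ, (n.factorial : ℝ) * ‖poch c n‖⁻¹ ≤ R ^ n := by
  have hne : ∀ n : ℕ, 0 < ‖c + n‖ := fun n =>
    norm_pos_iff.2 fun h => hc n (eq_neg_of_add_eq_zero_left h)
  obtain ⟨M, hM⟩ := exists_nat_ge (2 * ‖c‖ + 1)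
  have hs : 0 ≤ ∑ i ∈ Finset.range M, ((i : ℝ) + 1) / ‖c + i‖ :=
    Finset.sum_nonneg fun i _ => by positivity
  have hR : ∀ n : ℕ, ((n : ℝ) + 1) / ‖c + n‖ ≤
      2 + ∑ i ∈ Finset.range M, ((i : ℝ) + 1) / ‖c + i‖ := by
    intro n
    rcases lt_or_ge n M with h | h
    · have := Finset.single_le_sum (f := fun i : ℕ => ((i : ℝ) + 1) / ‖c + i‖)
        (fun i _ => by positivity) (Finset.mem_range.2 h)
      linarith
    · have h1 : (n : ℝ) - ‖c‖ ≤ ‖c + n‖ := by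
        have := norm_sub_norm_le (n : ℂ) (-c)
        rw [norm_neg, Complex.norm_natCast, sub_neg_eq_add, add_comm] at this
        simpa [add_comm] using this
      have h2 : (M : ℝ) ≤ n := by exact_mod_cast h
      have : ((n : ℝ) + 1) / ‖c + n‖ ≤ 2 := by
        rw [div_le_iff₀ (hne n)]
        linarith
      linarith
  refine ⟨_, add_pos_of_pos_of_nonneg two_pos hs, fun n => ?_⟩
  induction n with
  | zero => simp [poch_zero]
  | succ n ih =>
    rw [poch_succ, norm_mul, Nat.factorial_succ, pow_succ]
    calc _ = (n.factorial * ‖poch c n‖⁻¹) * (((n : ℝ) + 1) / ‖c + n‖) := by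
          push_cast
          rw [mul_inv]
          ring
      _ ≤ _ := mul_le_mul ih (hR n) (by positivity) (by positivity)

theorem norm_binC_le {α : ℂ} {M : ℕ} (h : ‖α‖ ≤ M) (j : ℕ) : ‖binC α j‖ ≤ 2 ^ (M + j) := by
  -- `(M + j).choose j` is the coefficient of `y ^ j` in `(1 - y) ^ (-(M + 1))`.
  have key : ‖binC α j‖ ≤ ((M + j).choose j : ℝ) := by
    induction j with
    | zero => simp [binC, poch_zero]
    | succ j ih =>
      have h1 := congrArg norm (binC_succ α j)
      rw [norm_neg, norm_mul, norm_mul, ← Nat.cast_add_one, Complex.norm_natCast] at h1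
      have h2 : (((M + j).choose j : ℕ) : ℝ) * (M + j + 1) =
          ((M + (j + 1)).choose (j + 1) : ℕ) * ((j + 1 : ℕ) : ℝ) := by
        have := Nat.add_one_mul_choose_eq (M + j) j
        rw [mul_comm] at this
        exact_mod_cast this
      have h3 : ‖α + j‖ ≤ M + j + 1 := by
        refine (norm_add_le _ _).trans ?_
        rw [Complex.norm_natCast]
        linarith
      refine le_of_mul_le_mul_right (a := ((j + 1 : ℕ) : ℝ)) ?_ (by positivity)
      rw [h1, ← h2]
      gcongr
  refine key.trans ?_
  exact_mod_cast Nat.choose_le_two_pow _ _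

/-- Regroups an absolutely convergent triple series by the value `N` of the sum of the last two
indices. -/
theorem tsum_regroup {f : ℕ × ℕ × ℕ → ℂ} (hf : Summable f) :
    ∑' p : ℕ × ℕ, ∑' j : ℕ, f (p.1, p.2, j) =
      ∑' p : ℕ × ℕ, ∑ k ∈ Finset.range (p.2 + 1), f (p.1, k, p.2 - k) := by
  have h1 : Summable fun q : (ℕ × ℕ) × ℕ => f (q.1.1, q.1.2, q.2) :=
    (Equiv.prodAssoc ℕ ℕ ℕ).summable_iff.2 hf
  rw [← h1.tsum_prod]
  have h2 : ∑' q : (ℕ × ℕ) × ℕ, f (q.1.1, q.1.2, q.2) = ∑' q, f q :=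
    (Equiv.prodAssoc ℕ ℕ ℕ).tsum_eq f
  rw [h2]
  let e : (Σ p : ℕ × ℕ, Finset.HasAntidiagonal.antidiagonal p.2) ≃ ℕ × ℕ × ℕ :=
    { toFun := fun s => (s.1.1, s.2.1.1, s.2.1.2)
      invFun := fun t => ⟨(t.1, t.2.1 + t.2.2), ⟨t.2, by simp⟩⟩
      left_inv := by
        rintro ⟨⟨n, N⟩, ⟨⟨k, j⟩, h⟩⟩
        obtain rfl : k + j = N := by simpa using h
        rfl
      right_inv := fun _ => rfl }
  have h3 : HasSum (f ∘ e) (∑' q, f q) := e.hasSum_iff.2 hf.hasSum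
  refine (HasSum.tsum_eq (h3.sigma (g := fun p : ℕ × ℕ =>
    ∑ k ∈ Finset.range (p.2 + 1), f (p.1, k, p.2 - k)) fun p => ?_)).symm
  rw [← Finset.Nat.sum_antidiagonal_eq_sum_range_succ (fun k j => f (p.1, k, j)),
    ← Finset.sum_coe_sort]
  exact hasSum_fintype _

/-! ### The triple series -/

/-- The term of `x ^ n * y ^ (k + j)` obtained by expanding the power of `1 + y` in the `(n, k)`-th
term of the right-hand side; here `t = (n, k, j)` and `D = a - b`. -/
noncomputable def tripleTerm (a b c D x y : ℂ) (t : ℕ × ℕ × ℕ) : ℂ :=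
  poch a t.1 * poch b t.1 / (poch c t.1 * (t.1.factorial : ℂ)) * x ^ t.1 *
    (quadW (a + t.1) D t.2.1 * binC (2 * (a + t.1) + 2 * t.2.1) t.2.2 * y ^ (t.2.1 + t.2.2))

/-- With `|(α)_n| ≤ (|α| + 1)^n n!`, `1 / |(c)_n| ≤ R^n / n!`, `(n + k)! ≤ 2^(n + k) n! k!` and
`norm_binC_le`, all factorials cancel and the terms are bounded by a constant times
`(u ‖x‖)^n (v ‖y‖)^k (2 ‖y‖)^j`. -/
theorem exists_summable_tripleTerm (a b c D : ℂ) (hc : ∀ n : ℕ, c ≠ -(n : ℂ))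
    (h : ∀ n : ℕ, 2 * D + 1 ≠ -(n : ℂ)) :
    ∃ ε > (0 : ℝ), ∀ x y : ℂ, ‖x‖ < ε → ‖y‖ < ε → Summable (tripleTerm a b c D x y) := by
  obtain ⟨R, hR, hRn⟩ := exists_poch_inv_le hc
  obtain ⟨S, hS, hSn⟩ := exists_poch_inv_le h
  obtain ⟨M, hM⟩ := exists_nat_ge (2 * ‖a‖)
  set P := ‖a‖ + 1 with hP
  set Q := ‖b‖ + 1 with hQ
  set T := ‖D + 1/2‖ + 1 with hT
  have hP0 : 0 < P := by positivity
  have hQ0 : 0 < Q := by positivity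
  have hT0 : 0 < T := by positivity
  set u := 8 * P * Q * R with hu
  set v := 32 * P * T * S with hv
  have hu0 : 0 < u := by positivity
  have hv0 : 0 < v := by positivity
  refine ⟨1 / (u + v + 2), by positivity, fun x y hx hy => ?_⟩
  rw [lt_div_iff₀ (by positivity)] at hx hy
  have hx1 : u * ‖x‖ < 1 := by nlinarith [norm_nonneg x]
  have hy1 : v * ‖y‖ < 1 := by nlinarith [norm_nonneg y]
  have hy2 : 2 * ‖y‖ < 1 := by nlinarith [norm_nonneg y]
  have gx := summable_geometric_of_lt_one (by positivity) hx1
  have gy := summable_geometric_of_lt_one (by positivity) hy1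
  have gz := summable_geometric_of_lt_one (by positivity) hy2
  have gyz := gy.mul_of_nonneg gz (fun n => by positivity) (fun n => by positivity)
  have g := gx.mul_of_nonneg gyz (fun n => by positivity) (fun n => by positivity)
  refine Summable.of_norm_bounded (g.mul_left (2 ^ M)) ?_
  rintro ⟨n, k, j⟩
  have e : tripleTerm a b c D x y (n, k, j) = poch a (n + k) * poch b n * (poch c n)⁻¹ *
      (n.factorial : ℂ)⁻¹ * x ^ n * (poch (D + 1/2) k * 4 ^ k * (poch (2 * D + 1) k)⁻¹ *
      (k.factorial : ℂ)⁻¹) * binC (2 * (a + n) + 2 * k) j * y ^ (k + j) := by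
    simp only [tripleTerm, quadW, poch_add]
    simp only [div_eq_mul_inv, mul_inv]
    ring
  have hb : ‖binC (2 * (a + n) + 2 * k) j‖ ≤ 2 ^ (M + 2 * n + 2 * k + j) := by
    refine norm_binC_le (M := M + 2 * n + 2 * k) ?_ j
    refine (norm_add_le _ _).trans ?_
    rw [norm_mul, norm_mul, Complex.norm_natCast, Complex.norm_ofNat]
    have := norm_add_le a (n : ℂ)
    rw [Complex.norm_natCast] at this
    push_cast
    linarith
  have hf : ((n + k).factorial : ℝ) ≤ 2 ^ (n + k) * (n.factorial * k.factorial) := by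
    have h1 := Nat.add_choose_mul_factorial_mul_factorial n k
    have h2 := Nat.choose_le_two_pow (n + k) k
    have : (n + k).factorial ≤ 2 ^ (n + k) * (n.factorial * k.factorial) := by
      rw [← h1, mul_assoc]
      gcongr
    exact_mod_cast this
  have hpa : ‖poch a (n + k)‖ ≤ P ^ (n + k) * (2 ^ (n + k) * (n.factorial * k.factorial)) :=
    (norm_poch_le a (n + k)).trans (by gcongr)
  have hpb := norm_poch_le b n
  have hpd := norm_poch_le (D + 1/2) k
  have hnf : (0 : ℝ) < n.factorial := by exact_mod_cast n.factorial_pos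
  have hkf : (0 : ℝ) < k.factorial := by exact_mod_cast k.factorial_pos
  have hpc : ‖poch c n‖⁻¹ ≤ R ^ n * (n.factorial : ℝ)⁻¹ := by
    rw [← div_eq_mul_inv, le_div_iff₀ hnf, mul_comm]
    exact hRn n
  have hpe : ‖poch (2 * D + 1) k‖⁻¹ ≤ S ^ k * (k.factorial : ℝ)⁻¹ := by
    rw [← div_eq_mul_inv, le_div_iff₀ hkf, mul_comm]
    exact hSn k
  rw [← hQ] at hpb
  rw [← hT] at hpd
  rw [e]
  simp only [norm_mul, norm_inv, norm_pow, Complex.norm_natCast, Complex.norm_ofNat]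
  calc _ ≤ P ^ (n + k) * (2 ^ (n + k) * (n.factorial * k.factorial)) * (Q ^ n * n.factorial) *
        (R ^ n * (n.factorial : ℝ)⁻¹) * (n.factorial : ℝ)⁻¹ * ‖x‖ ^ n * (T ^ k * k.factorial * 4 ^ k *
        (S ^ k * (k.factorial : ℝ)⁻¹) * (k.factorial : ℝ)⁻¹) * 2 ^ (M + 2 * n + 2 * k + j) *
        ‖y‖ ^ (k + j) := by gcongr
    _ = 2 ^ M * ((u * ‖x‖) ^ n * ((v * ‖y‖) ^ k * (2 * ‖y‖) ^ j)) := by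
      have e8 : (8 : ℝ) ^ n = 2 ^ n * 2 ^ (2 * n) := by
        rw [pow_mul, ← mul_pow]
        norm_num
      have e32 : (32 : ℝ) ^ k = 2 ^ k * 4 ^ k * 2 ^ (2 * k) := by
        rw [pow_mul, ← mul_pow, ← mul_pow]
        norm_num
      simp only [hu, hv, mul_pow, e8, e32, pow_add]
      field_simp

theorem one_add_cpow_mul_F2 {a b c D x y : ℂ} (hy : ‖y‖ < 1) :
    (1 + y) ^ (-(2 * a)) * F2 a b (D + 1/2) c (2 * D + 1) (x / (1 + y)^2) (4 * y / (1 + y)^2) =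
      ∑' p : ℕ × ℕ, ∑' j : ℕ, tripleTerm a b c D x y (p.1, p.2, j) := by
  have h1 : 1 + y ≠ 0 := by
    intro h
    rw [eq_neg_of_add_eq_zero_right h] at hy
    simp at hy
  rw [F2, ← tsum_mul_left]
  refine tsum_congr fun ⟨n, k⟩ => ?_
  have hs := (hasSum_binC (2 * (a + n) + 2 * k) hy).mul_left
    (poch a n * poch b n / (poch c n * (n.factorial : ℂ)) * x ^ n * (quadW (a + n) D k * y ^ k))
  have hs' : HasSum (fun j => tripleTerm a b c D x y (n, k, j)) _ :=
    hs.congr_fun fun j => by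
      simp only [tripleTerm, pow_add]
      ring
  rw [hs'.tsum_eq]
  have hcp : (1 + y) ^ (-(2 * (a + n) + 2 * k)) =
      (1 + y) ^ (-(2 * a)) / (((1 + y) ^ 2) ^ n * ((1 + y) ^ 2) ^ k) := by
    rw [← pow_mul, ← pow_mul, ← pow_add, ← Complex.cpow_natCast, ← Complex.cpow_sub _ _ h1]
    congr 1
    push_cast
    ring
  simp only [hcp, quadW, poch_add, mul_pow, div_eq_mul_inv, mul_inv]
  ring

theorem sum_tripleTerm (a b c D x y : ℂ) (n N : ℕ) :
    ∑ k ∈ Finset.range (N + 1), tripleTerm a b c D x y (n, k, N - k) =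
      poch a n * poch b n / (poch c n * (n.factorial : ℂ)) * x ^ n * y ^ N *
        quadS (a + n) D N := by
  rw [quadS, Finset.mul_sum]
  refine Finset.sum_congr rfl fun k hk => ?_
  have : k + (N - k) = N := by
    have := Finset.mem_range.1 hk
    omega
  simp only [tripleTerm, this]
  ring

theorem F4_F2_Srivastava (a b c : ℂ) (hc : ∀ n : ℕ, c ≠ -(n : ℂ))
    (hc2 : ∀ n : ℕ, a - b + 1 ≠ -(n : ℂ)) (hc3 : ∀ n : ℕ, 2 * a - 2 * b + 1 ≠ -(n : ℂ)) :
    ∃ ε > (0 : ℝ), ∀ x y : ℂ, ‖x‖ < ε → ‖y‖ < ε →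
      F4 a b c (a - b + 1) x (y^2) =
        (1 + y) ^ (-(2 * a)) *
          F2 a b (a - b + 1/2) c (2 * a - 2 * b + 1) (x / (1 + y)^2) (4 * y / (1 + y)^2) := by
  rw [show 2 * a - 2 * b + 1 = 2 * (a - b) + 1 by ring] at *
  obtain ⟨ε, hε, H⟩ := exists_summable_tripleTerm a b c (a - b) hc hc3
  refine ⟨min ε 1, lt_min hε one_pos, fun x y hx hy => ?_⟩
  have hs := H x y (hx.trans_le (min_le_left _ _)) (hy.trans_le (min_le_left _ _))
  rw [one_add_cpow_mul_F2 (hy.trans_le (min_le_right _ _)), tsum_regroup hs]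
  simp only [sum_tripleTerm]
  -- The terms with odd exponent of `y` vanish, so the sum runs over the range of this map.
  have hinj : Function.Injective fun p : ℕ × ℕ => (p.1, 2 * p.2) := by
    rintro ⟨n, m⟩ ⟨n', m'⟩ h
    simp only [Prod.mk.injEq] at h ⊢
    omega
  rw [← hinj.tsum_eq]
  · rw [F4]
    refine tsum_congr fun ⟨n, m⟩ => ?_
    simp only [quadS_even _ _ hc3 hc2, poch_add, pow_mul]
    rw [show a + n - (a - b) = b + n by ring]
    simp only [div_eq_mul_inv, mul_inv]
    ring
  · rintro ⟨n, N⟩ h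
    rcases Nat.even_or_odd' N with ⟨m, rfl | rfl⟩
    · exact ⟨(n, m), rfl⟩
    · exact absurd (by simp only [quadS_odd _ _ hc3, mul_zero]) h
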